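/- Suppose X ∈ ℝ^{n₁×n₂} has rank r, y = 𝒜(X) + w with ‖𝒜*(w)‖₂ ≤ λ, and ρ_{8r}^min(𝒜) > 0. Then any solution X̂ of the matrix Dantzig selector min_Z ‖Z‖_* subject to ‖𝒜*(y − 𝒜(Z))‖₂ ≤ λ satisfies ‖X̂ − X‖_F ≤ (4√2 / (ρ_{8r}^min(𝒜))²) · √r · λ. -/

import Mathlib

open scoped BigOperators

noncomputable section

/-- Frobenius norm of a real matrix. -/
def frobNorm {n₁ n₂ : ℕ} (X : Matrix (Fin n₁) (Fin n₂) ℝ) : ℝ :=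
  Real.sqrt (∑ i, ∑ j, (X i j) ^ 2)

/-- Singular values of a real matrix: square roots of eigenvalues of `X * Xᴴ`. -/
def singVals {n₁ n₂ : ℕ} (X : Matrix (Fin n₁) (Fin n₂) ℝ) : Fin n₁ → ℝ :=
  fun i => Real.sqrt ((Matrix.isHermitian_mul_conjTranspose_self X).eigenvalues i)

/-- Nuclear norm: sum of singular values. -/
def nuclearNorm {n₁ n₂ : ℕ} (X : Matrix (Fin n₁) (Fin n₂) ℝ) : ℝ :=
  ∑ i, singVals X i

/-- Operator norm: largest singular value. -/
def matOpNorm {n₁ n₂ : ℕ} (X : Matrix (Fin n₁) (Fin n₂) ℝ) : ℝ :=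
  ⨆ i, singVals X i

/-- ℓ*-rank. -/
def lstarRank {n₁ n₂ : ℕ} (X : Matrix (Fin n₁) (Fin n₂) ℝ) : ℝ :=
  nuclearNorm X ^ 2 / frobNorm X ^ 2

/-- Euclidean norm of a vector. -/
def vnorm {m : ℕ} (v : Fin m → ℝ) : ℝ :=
  Real.sqrt (∑ k, (v k) ^ 2)

/-- Matrix inner product. -/
def matInner {n₁ n₂ : ℕ} (X Y : Matrix (Fin n₁) (Fin n₂) ℝ) : ℝ :=
  (X.transpose * Y).trace

def cmsvMin {n₁ n₂ m : ℕ} (A : Matrix (Fin n₁) (Fin n₂) ℝ → (Fin m → ℝ)) (τ : ℝ) : ℝ :=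
  sInf {c | ∃ X : Matrix (Fin n₁) (Fin n₂) ℝ, X ≠ 0 ∧ lstarRank X ≤ τ ∧ c = vnorm (A X) / frobNorm X}

def cmsvMax {n₁ n₂ m : ℕ} (A : Matrix (Fin n₁) (Fin n₂) ℝ → (Fin m → ℝ)) (τ : ℝ) : ℝ :=
  sSup {c | ∃ X : Matrix (Fin n₁) (Fin n₂) ℝ, X ≠ 0 ∧ lstarRank X ≤ τ ∧ c = vnorm (A X) / frobNorm X}

def rcsvMin {n₁ n₂ m : ℕ} (A : Matrix (Fin n₁) (Fin n₂) ℝ → (Fin m → ℝ)) (r : ℕ) : ℝ :=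
  sInf {c | ∃ X : Matrix (Fin n₁) (Fin n₂) ℝ, X ≠ 0 ∧ X.rank ≤ r ∧ c = vnorm (A X) / frobNorm X}

def rcsvMax {n₁ n₂ m : ℕ} (A : Matrix (Fin n₁) (Fin n₂) ℝ → (Fin m → ℝ)) (r : ℕ) : ℝ :=
  sSup {c | ∃ X : Matrix (Fin n₁) (Fin n₂) ℝ, X ≠ 0 ∧ X.rank ≤ r ∧ c = vnorm (A X) / frobNorm X}

def mRIC {n₁ n₂ m : ℕ} (A : Matrix (Fin n₁) (Fin n₂) ℝ → (Fin m → ℝ)) (r : ℕ) : ℝ :=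
  sInf {δ : ℝ | 0 < δ ∧ ∀ X : Matrix (Fin n₁) (Fin n₂) ℝ, X ≠ 0 → X.rank ≤ r →
    1 - δ ≤ (vnorm (A X)) ^ 2 / (frobNorm X) ^ 2 ∧ (vnorm (A X)) ^ 2 / (frobNorm X) ^ 2 ≤ 1 + δ}

def opOf {n₁ n₂ m : ℕ} (A : Fin m → Matrix (Fin n₁) (Fin n₂) ℝ) :
    Matrix (Fin n₁) (Fin n₂) ℝ → (Fin m → ℝ) :=
  fun X k => matInner (A k) X

/-! The nuclear norm is dual to the operator norm, and the partial isometry `W` of the polar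
decomposition `X = |Xᴴ| W` attains the duality: `‖X‖_* = ⟨X, W⟩`. Hence the nuclear norm is additive
on pairs of matrices with orthogonal column spaces and orthogonal row spaces.

Let `H = X̂ - X`, and split `H = T + N`, where `N` has row and column spaces orthogonal to those of
`X`, `rank T ≤ 2 r` and `⟨T, N⟩ = 0`. From `‖X‖_* + ‖N‖_* = ‖X + N‖_* = ‖X̂ - T‖_* ≤ ‖X‖_* + ‖T‖_*`
we get `‖N‖_* ≤ ‖T‖_*`, so `‖H‖_*² ≤ 4 ‖T‖_*² ≤ 8 r ‖T‖_F² ≤ 8 r ‖H‖_F²`: the error has ℓ*-rank at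
most `8 r`. Therefore `ρ² ‖H‖_F² ≤ ‖𝒜 H‖₂² = ⟨H, 𝒜* 𝒜 H⟩ ≤ ‖H‖_* ‖𝒜* 𝒜 H‖₂`, which is at most
`√(8 r) ‖H‖_F · 2 λ`. -/

section RankAdd

open Matrix

variable {m n K : Type*} [Fintype n] [Field K]

lemma rank_add_le (A B : Matrix m n K) : (A + B).rank ≤ A.rank + B.rank := by
  rw [Matrix.rank, Matrix.rank, Matrix.rank, Matrix.mulVecLin_add]
  exact (Submodule.finrank_mono (LinearMap.range_add_le _ _)).trans
    (Submodule.finrank_add_le_finrank_add_finrank _ _)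

end RankAdd

section Adjoint

open Matrix

variable {l m n R : Type*} [NonUnitalSemiring R] [StarRing R]

lemma conjTranspose_mul_eq_zero_comm [Fintype m] {A : Matrix m n R} {B : Matrix m l R} :
    Aᴴ * B = 0 ↔ Bᴴ * A = 0 := by
  rw [← conjTranspose_eq_zero, conjTranspose_mul, conjTranspose_conjTranspose]

lemma mul_conjTranspose_eq_zero_comm [Fintype n] {A : Matrix m n R} {B : Matrix l n R} :
    A * Bᴴ = 0 ↔ B * Aᴴ = 0 := by
  rw [← conjTranspose_eq_zero, conjTranspose_mul, conjTranspose_conjTranspose]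

end Adjoint

section PartialIsometry

open Matrix

variable {m n R : Type*} [Fintype m] [Fintype n] [NonUnitalSemiring R] [StarRing R]

/-- `W` is a partial isometry: `Wᴴ` inverts `W` from the range of `Wᴴ` onto the range of `W`. Such
matrices are the test matrices in the duality between the nuclear and the operator norm. -/
def IsPartialIsometry (W : Matrix m n R) : Prop :=
  W * Wᴴ * W = W

namespace IsPartialIsometry

variable {V W : Matrix m n R}

lemma isStarProjection_mul_conjTranspose (hW : IsPartialIsometry W) :
    IsStarProjection (W * Wᴴ) where
  isIdempotentElem := by rw [IsIdempotentElem, ← Matrix.mul_assoc, hW]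
  isSelfAdjoint := isHermitian_mul_conjTranspose_self W

lemma add (hV : IsPartialIsometry V) (hW : IsPartialIsometry W) (hcol : Vᴴ * W = 0)
    (hrow : V * Wᴴ = 0) : IsPartialIsometry (V + W) := by
  have hcol' := conjTranspose_mul_eq_zero_comm.1 hcol
  have hrow' := mul_conjTranspose_eq_zero_comm.1 hrow
  have hproj : (V + W) * (V + W)ᴴ = V * Vᴴ + W * Wᴴ := by
    simp only [conjTranspose_add, Matrix.mul_add, Matrix.add_mul, hrow, hrow', add_zero, zero_add]
  calc (V + W) * (V + W)ᴴ * (V + W)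
      = V * Vᴴ * V + W * (Wᴴ * V) + (V * (Vᴴ * W) + W * Wᴴ * W) := by
        simp only [hproj, Matrix.mul_add, Matrix.add_mul, Matrix.mul_assoc]
    _ = V + W := by rw [hV, hW, hcol, hcol', Matrix.mul_zero, Matrix.mul_zero, add_zero, zero_add]

end IsPartialIsometry

end PartialIsometry

section PolarFactor

open Matrix
open scoped ComplexOrder

variable {m n 𝕜 : Type*} [RCLike 𝕜] [Fintype m] [Fintype n] [DecidableEq m]

lemma cfc_mul_cfc (f g : ℝ → ℝ) (A : Matrix m m 𝕜) :
    cfc f A * cfc g A = cfc (fun x => f x * g x) A :=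
  (cfc_mul f g A (A.finite_real_spectrum.continuousOn f)
    (A.finite_real_spectrum.continuousOn g)).symm

lemma trace_cfc {A : Matrix m m 𝕜} (hA : A.IsHermitian) (f : ℝ → ℝ) :
    (cfc f A).trace = ∑ i, (f (hA.eigenvalues i) : 𝕜) := by
  rw [hA.cfc_eq, IsHermitian.cfc, Unitary.conjStarAlgAut_apply, Matrix.trace_mul_comm,
    ← Matrix.mul_assoc, Unitary.coe_star_mul_self, Matrix.one_mul, trace_diagonal]
  rfl

lemma nonneg_of_mem_spectrum_mul_conjTranspose (X : Matrix m n 𝕜) {x : ℝ}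
    (hx : x ∈ spectrum ℝ (X * Xᴴ)) : 0 ≤ x :=
  RCLike.ofReal_nonneg.1 <|
    (posSemidef_iff_isHermitian_and_spectrum_nonneg.1 (posSemidef_self_mul_conjTranspose X)).2
      ((spectrum.algebraMap_mem_iff 𝕜).2 hx)

/-- The partial isometry `W` of the polar decomposition `X = |Xᴴ| W`. Since `0⁻¹ = 0`, the function
`x ↦ (√x)⁻¹` is the pseudo-inverse of the square root, so `W` vanishes on the kernel of `X`. -/
def polarFactor (X : Matrix m n 𝕜) : Matrix m n 𝕜 :=
  cfc (fun x : ℝ => (√x)⁻¹) (X * Xᴴ) * X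

lemma mul_conjTranspose_polarFactor (X : Matrix m n 𝕜) :
    X * (polarFactor X)ᴴ = cfc Real.sqrt (X * Xᴴ) := by
  have hX : IsSelfAdjoint (X * Xᴴ) := isHermitian_mul_conjTranspose_self X
  have hW : (cfc (fun x : ℝ => (√x)⁻¹) (X * Xᴴ))ᴴ = cfc (fun x : ℝ => (√x)⁻¹) (X * Xᴴ) :=
    IsSelfAdjoint.cfc.star_eq
  calc X * (polarFactor X)ᴴ = cfc id (X * Xᴴ) * cfc (fun x : ℝ => (√x)⁻¹) (X * Xᴴ) := by
        rw [polarFactor, conjTranspose_mul, hW, cfc_id ℝ (X * Xᴴ) hX, Matrix.mul_assoc]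
    _ = cfc Real.sqrt (X * Xᴴ) := by
        simp only [cfc_mul_cfc, id, ← div_eq_mul_inv, Real.div_sqrt]

lemma isPartialIsometry_polarFactor (X : Matrix m n 𝕜) : IsPartialIsometry (polarFactor X) := by
  have hpinv : ∀ x : ℝ, (√x)⁻¹ * √x * (√x)⁻¹ = (√x)⁻¹ := fun x => by
    simpa only [inv_inv] using mul_inv_mul_cancel (√x)⁻¹
  calc polarFactor X * (polarFactor X)ᴴ * polarFactor X
      = cfc (fun x : ℝ => (√x)⁻¹) (X * Xᴴ) * (X * (polarFactor X)ᴴ) *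
          cfc (fun x : ℝ => (√x)⁻¹) (X * Xᴴ) * X := by
        simp only [polarFactor, Matrix.mul_assoc]
    _ = polarFactor X := by
        rw [mul_conjTranspose_polarFactor, cfc_mul_cfc, cfc_mul_cfc, polarFactor]
        simp only [hpinv]

lemma mul_conjTranspose_polarFactor_mul_polarFactor (X : Matrix m n 𝕜) :
    X * (polarFactor X)ᴴ * polarFactor X = X := by
  have hX : IsSelfAdjoint (X * Xᴴ) := isHermitian_mul_conjTranspose_self X
  have hfix : cfc (fun x : ℝ => √x * (√x)⁻¹) (X * Xᴴ) * (X * Xᴴ) = X * Xᴴ := by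
    conv_lhs => enter [2]; rw [← cfc_id ℝ (X * Xᴴ) hX]
    conv_rhs => rw [← cfc_id ℝ (X * Xᴴ) hX]
    rw [cfc_mul_cfc]
    refine cfc_congr fun x hx => ?_
    have hsq := Real.mul_self_sqrt (nonneg_of_mem_spectrum_mul_conjTranspose X hx)
    calc √x * (√x)⁻¹ * x = √x * (√x)⁻¹ * √x * √x := by rw [mul_assoc _ √x, hsq]
      _ = x := by rw [mul_inv_mul_cancel, hsq]
  have hzero : (cfc (fun x : ℝ => √x * (√x)⁻¹) (X * Xᴴ) - 1) * X = 0 := by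
    rw [← mul_self_mul_conjTranspose_eq_zero, Matrix.sub_mul, hfix, Matrix.one_mul, sub_self]
  rw [mul_conjTranspose_polarFactor, polarFactor, ← Matrix.mul_assoc, cfc_mul_cfc]
  rwa [Matrix.sub_mul, Matrix.one_mul, sub_eq_zero] at hzero

lemma polarFactor_mul_conjTranspose_polarFactor_mul (X : Matrix m n 𝕜) :
    polarFactor X * (polarFactor X)ᴴ * X = X := by
  have habs : X * (polarFactor X)ᴴ = polarFactor X * Xᴴ := by
    have hsa : (X * (polarFactor X)ᴴ)ᴴ = X * (polarFactor X)ᴴ := by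
      rw [mul_conjTranspose_polarFactor]
      exact IsSelfAdjoint.cfc.star_eq
    rw [← hsa, conjTranspose_mul, conjTranspose_conjTranspose]
  have hX : polarFactor X * Xᴴ * polarFactor X = X := by
    rw [← habs, mul_conjTranspose_polarFactor_mul_polarFactor]
  calc polarFactor X * (polarFactor X)ᴴ * X
      = polarFactor X * (polarFactor X)ᴴ * polarFactor X * (Xᴴ * polarFactor X) := by
        rw [Matrix.mul_assoc _ (polarFactor X), ← Matrix.mul_assoc (polarFactor X) Xᴴ, hX]
    _ = X := by rw [isPartialIsometry_polarFactor, ← Matrix.mul_assoc, hX]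

lemma exists_polarFactor_eq_mul (X : Matrix m n 𝕜) :
    ∃ G : Matrix n n 𝕜, polarFactor X = X * G := by
  have hX : IsSelfAdjoint (X * Xᴴ) := isHermitian_mul_conjTranspose_self X
  have hfun : (fun x : ℝ => (√x)⁻¹) = fun x => id x * (x⁻¹ * (√x)⁻¹) := by
    funext x
    rcases eq_or_ne x 0 with rfl | hx
    · simp
    · rw [id, mul_inv_cancel_left₀ hx]
  refine ⟨Xᴴ * cfc (fun x : ℝ => x⁻¹ * (√x)⁻¹) (X * Xᴴ) * X, ?_⟩
  rw [polarFactor, hfun, ← cfc_mul_cfc, cfc_id ℝ (X * Xᴴ) hX]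
  simp only [Matrix.mul_assoc]

lemma mul_polarFactor_eq_zero {l : Type*} {X : Matrix m n 𝕜} {Y : Matrix l m 𝕜}
    (h : Y * X = 0) : Y * polarFactor X = 0 := by
  obtain ⟨G, hG⟩ := exists_polarFactor_eq_mul X
  rw [hG, ← Matrix.mul_assoc, h, Matrix.zero_mul]

lemma polarFactor_mul_eq_zero {l : Type*} {X : Matrix m n 𝕜} {Y : Matrix n l 𝕜}
    (h : X * Y = 0) : polarFactor X * Y = 0 := by
  rw [polarFactor, Matrix.mul_assoc, h, Matrix.mul_zero]

lemma rank_polarFactor_le (X : Matrix m n 𝕜) : (polarFactor X).rank ≤ X.rank :=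
  rank_mul_le_right _ _

lemma trace_mul_conjTranspose_polarFactor (X : Matrix m n 𝕜) :
    (X * (polarFactor X)ᴴ).trace =
      ∑ i, (√((isHermitian_mul_conjTranspose_self X).eigenvalues i) : 𝕜) := by
  rw [mul_conjTranspose_polarFactor, trace_cfc]

end PolarFactor

section TangentSpace

open Matrix

variable {m n 𝕜 : Type*} [RCLike 𝕜] [Fintype m] [Fintype n] [DecidableEq m] [DecidableEq n]

/-- The component of `H` normal to the variety of matrices of rank `X.rank` at `X`: what is left of
`H` after projecting away the column space and the row space of `X`. -/
def normalPart (X H : Matrix m n 𝕜) : Matrix m n 𝕜 :=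
  (1 - polarFactor X * (polarFactor X)ᴴ) * H * (1 - (polarFactor X)ᴴ * polarFactor X)

/-- The component of `H` tangent at `X` to the variety of matrices of rank `X.rank`. -/
def tangentPart (X H : Matrix m n 𝕜) : Matrix m n 𝕜 :=
  H - normalPart X H

lemma tangentPart_add_normalPart (X H : Matrix m n 𝕜) : tangentPart X H + normalPart X H = H :=
  sub_add_cancel _ _

lemma conjTranspose_mul_normalPart (X H : Matrix m n 𝕜) : Xᴴ * normalPart X H = 0 := by
  have hcol : Xᴴ * (1 - polarFactor X * (polarFactor X)ᴴ) = 0 := by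
    have h := congrArg conjTranspose (polarFactor_mul_conjTranspose_polarFactor_mul X)
    simp only [conjTranspose_mul, conjTranspose_conjTranspose] at h
    rw [Matrix.mul_sub, Matrix.mul_one, h, sub_self]
  rw [normalPart, ← Matrix.mul_assoc, ← Matrix.mul_assoc, hcol, Matrix.zero_mul, Matrix.zero_mul]

lemma mul_conjTranspose_normalPart (X H : Matrix m n 𝕜) : X * (normalPart X H)ᴴ = 0 := by
  have hrow : X * (1 - (polarFactor X)ᴴ * polarFactor X) = 0 := by
    rw [Matrix.mul_sub, Matrix.mul_one, ← Matrix.mul_assoc,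
      mul_conjTranspose_polarFactor_mul_polarFactor, sub_self]
  have hsa : (1 - (polarFactor X)ᴴ * polarFactor X)ᴴ = 1 - (polarFactor X)ᴴ * polarFactor X := by
    simp
  rw [normalPart, conjTranspose_mul, hsa, ← Matrix.mul_assoc, hrow, Matrix.zero_mul]

lemma tangentPart_eq (X H : Matrix m n 𝕜) :
    tangentPart X H = polarFactor X * ((polarFactor X)ᴴ * H) +
      (1 - polarFactor X * (polarFactor X)ᴴ) * H * (polarFactor X)ᴴ * polarFactor X := by
  simp only [tangentPart, normalPart, Matrix.mul_sub, Matrix.sub_mul, Matrix.mul_one,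
    Matrix.one_mul, Matrix.mul_assoc]
  abel

lemma rank_tangentPart_le (X H : Matrix m n 𝕜) : (tangentPart X H).rank ≤ 2 * X.rank := by
  rw [tangentPart_eq, two_mul]
  exact (rank_add_le _ _).trans <| add_le_add
    ((rank_mul_le_left _ _).trans (rank_polarFactor_le X))
    ((rank_mul_le_right _ _).trans (rank_polarFactor_le X))

lemma trace_conjTranspose_tangentPart_mul_normalPart (X H : Matrix m n 𝕜) :
    ((tangentPart X H)ᴴ * normalPart X H).trace = 0 := by
  have hcol : (polarFactor X)ᴴ * normalPart X H = 0 :=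
    conjTranspose_mul_eq_zero_comm.1 <| mul_polarFactor_eq_zero <|
      conjTranspose_mul_eq_zero_comm.1 (conjTranspose_mul_normalPart X H)
  have hrow : normalPart X H * (polarFactor X)ᴴ = 0 :=
    mul_conjTranspose_eq_zero_comm.1 (polarFactor_mul_eq_zero (mul_conjTranspose_normalPart X H))
  rw [tangentPart_eq, conjTranspose_add, Matrix.add_mul, trace_add, conjTranspose_mul,
    Matrix.mul_assoc, hcol, Matrix.mul_zero, trace_zero, zero_add, conjTranspose_mul,
    Matrix.mul_assoc, trace_mul_comm, Matrix.mul_assoc, hrow, Matrix.mul_zero, trace_zero]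

end TangentSpace

section OperatorNorm

open Matrix
open scoped Matrix.Norms.L2Operator

section

variable {m n 𝕜 : Type*} [RCLike 𝕜] [Fintype m] [Fintype n] [DecidableEq n]

lemma l2_opNorm_mul_conjTranspose_self [DecidableEq m] (M : Matrix m n 𝕜) :
    ‖M * Mᴴ‖ = ‖M‖ * ‖M‖ := by
  have h := l2_opNorm_conjTranspose_mul_self Mᴴ
  rwa [conjTranspose_conjTranspose, l2_opNorm_conjTranspose] at h

lemma IsPartialIsometry.l2_opNorm_le_one {W : Matrix m n 𝕜} (hW : IsPartialIsometry W) :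
    ‖W‖ ≤ 1 := by
  classical
  rw [← abs_norm W, abs_le_one_iff_mul_self_le_one, ← l2_opNorm_mul_conjTranspose_self]
  exact hW.isStarProjection_mul_conjTranspose.norm_le

lemma l2_opNorm_unitary_mul [DecidableEq m] {U : Matrix m m 𝕜} (hU : U ∈ unitaryGroup m 𝕜)
    (M : Matrix m n 𝕜) : ‖U * M‖ = ‖M‖ := by
  refine (mul_self_inj (norm_nonneg _) (norm_nonneg _)).1 ?_
  rw [← l2_opNorm_conjTranspose_mul_self, ← l2_opNorm_conjTranspose_mul_self, conjTranspose_mul,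
    Matrix.mul_assoc, ← Matrix.mul_assoc _ U, ← star_eq_conjTranspose U,
    mem_unitaryGroup_iff'.1 hU, Matrix.one_mul]

lemma norm_toLp_row_le_l2_opNorm (M : Matrix m n 𝕜) (i : m) : ‖WithLp.toLp 2 (M i)‖ ≤ ‖M‖ := by
  classical
  have h := l2_opNorm_mulVec Mᴴ (EuclideanSpace.single i 1)
  simp only [l2_opNorm_conjTranspose, PiLp.norm_single, norm_one, mul_one] at h
  simpa [EuclideanSpace.norm_eq, Matrix.mulVec_single] using h

end

variable {n₁ n₂ : ℕ}

lemma eigenvalues_eq_sq_singVals (X : Matrix (Fin n₁) (Fin n₂) ℝ) :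
    (isHermitian_mul_conjTranspose_self X).eigenvalues = fun i => singVals X i ^ 2 :=
  funext fun i =>
    (Real.sq_sqrt ((posSemidef_self_mul_conjTranspose X).eigenvalues_nonneg i)).symm

lemma singVals_nonneg (X : Matrix (Fin n₁) (Fin n₂) ℝ) (i : Fin n₁) : 0 ≤ singVals X i :=
  Real.sqrt_nonneg _

lemma exists_unitary_mul_mul_conjTranspose_eq_diagonal (X : Matrix (Fin n₁) (Fin n₂) ℝ) :
    ∃ U ∈ unitaryGroup (Fin n₁) ℝ, (U * X) * (U * X)ᴴ = diagonal fun i => singVals X i ^ 2 := by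
  have hX := isHermitian_mul_conjTranspose_self X
  refine ⟨star hX.eigenvectorUnitary, (star hX.eigenvectorUnitary).2, ?_⟩
  have h := hX.conjStarAlgAut_star_eigenvectorUnitary
  rw [Unitary.conjStarAlgAut_star_apply, eigenvalues_eq_sq_singVals] at h
  rw [conjTranspose_mul, ← star_eq_conjTranspose (star _), star_star, ← Matrix.mul_assoc,
    Matrix.mul_assoc _ X]
  exact h

lemma norm_singVals (M : Matrix (Fin n₁) (Fin n₂) ℝ) : ‖singVals M‖ = matOpNorm M := by
  rcases isEmpty_or_nonempty (Fin n₁) with h | h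
  · rw [matOpNorm, Real.iSup_of_isEmpty, norm_eq_zero]
    exact Subsingleton.elim _ _
  have hbdd : BddAbove (Set.range (singVals M)) := (Set.finite_range _).bddAbove
  refine le_antisymm ((pi_norm_le_iff_of_nonempty _).2 fun i => ?_) (ciSup_le fun i => ?_)
  · rw [Real.norm_of_nonneg (singVals_nonneg M i)]
    exact le_ciSup hbdd i
  · exact (Real.le_norm_self _).trans (norm_le_pi_norm _ i)

lemma matOpNorm_eq_l2_opNorm (M : Matrix (Fin n₁) (Fin n₂) ℝ) : matOpNorm M = ‖M‖ := by
  obtain ⟨U, hU, hgram⟩ := exists_unitary_mul_mul_conjTranspose_eq_diagonal M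
  have hsq : ‖M‖ * ‖M‖ = ‖singVals M‖ * ‖singVals M‖ := by
    rw [← l2_opNorm_unitary_mul hU M, ← l2_opNorm_mul_conjTranspose_self, hgram,
      l2_opNorm_diagonal, ← CStarRing.norm_self_mul_star (x := singVals M)]
    congr 1
    funext i
    exact pow_two _
  rw [← norm_singVals]
  exact ((mul_self_inj (norm_nonneg _) (norm_nonneg _)).1 hsq).symm

lemma matOpNorm_nonneg (M : Matrix (Fin n₁) (Fin n₂) ℝ) : 0 ≤ matOpNorm M :=
  Real.iSup_nonneg (singVals_nonneg M)

lemma matOpNorm_sub_le (M N : Matrix (Fin n₁) (Fin n₂) ℝ) :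
    matOpNorm (M - N) ≤ matOpNorm M + matOpNorm N := by
  simp only [matOpNorm_eq_l2_opNorm]
  exact norm_sub_le M N

end OperatorNorm

section NuclearNorm

open Matrix

variable {n₁ n₂ : ℕ}

lemma matInner_eq_sum_inner (X Y : Matrix (Fin n₁) (Fin n₂) ℝ) :
    matInner X Y = ∑ i, inner ℝ (WithLp.toLp 2 (X i)) (WithLp.toLp 2 (Y i)) := by
  rw [matInner, trace_mul_comm]
  rfl

lemma frobNorm_sq (X : Matrix (Fin n₁) (Fin n₂) ℝ) : frobNorm X ^ 2 = matInner X X := by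
  rw [frobNorm, Real.sq_sqrt (by positivity), matInner_eq_sum_inner]
  simp only [real_inner_self_eq_norm_sq, EuclideanSpace.real_norm_sq_eq]

lemma matInner_add_left (X Y Z : Matrix (Fin n₁) (Fin n₂) ℝ) :
    matInner (X + Y) Z = matInner X Z + matInner Y Z := by
  rw [matInner, transpose_add, Matrix.add_mul, trace_add, matInner, matInner]

lemma matInner_sub_left (X Y Z : Matrix (Fin n₁) (Fin n₂) ℝ) :
    matInner (X - Y) Z = matInner X Z - matInner Y Z := by
  rw [matInner, transpose_sub, Matrix.sub_mul, trace_sub, matInner, matInner]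

lemma matInner_add_right (X Y Z : Matrix (Fin n₁) (Fin n₂) ℝ) :
    matInner X (Y + Z) = matInner X Y + matInner X Z := by
  rw [matInner, Matrix.mul_add, trace_add, matInner, matInner]

lemma matInner_comm (X Y : Matrix (Fin n₁) (Fin n₂) ℝ) : matInner X Y = matInner Y X := by
  rw [matInner, ← trace_transpose, transpose_mul, transpose_transpose, matInner]

lemma matInner_unitary_mul_unitary_mul {U : Matrix (Fin n₁) (Fin n₁) ℝ}
    (hU : U ∈ unitaryGroup (Fin n₁) ℝ) (X Y : Matrix (Fin n₁) (Fin n₂) ℝ) :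
    matInner (U * X) (U * Y) = matInner X Y := by
  rw [matInner, transpose_mul, Matrix.mul_assoc, ← Matrix.mul_assoc _ U,
    (mem_orthogonalGroup_iff' _ _).1 hU, Matrix.one_mul, matInner]

open scoped Matrix.Norms.L2Operator in
lemma abs_matInner_le (X M : Matrix (Fin n₁) (Fin n₂) ℝ) :
    |matInner X M| ≤ nuclearNorm X * matOpNorm M := by
  obtain ⟨U, hU, hgram⟩ := exists_unitary_mul_mul_conjTranspose_eq_diagonal X
  have hrow : ∀ i, ‖WithLp.toLp 2 ((U * X) i)‖ = singVals X i := fun i => by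
    rw [← sq_eq_sq₀ (norm_nonneg _) (singVals_nonneg X i), EuclideanSpace.real_norm_sq_eq]
    calc ∑ j, (U * X) i j ^ 2 = ((U * X) * (U * X)ᴴ) i i := by
          simp only [Matrix.mul_apply (M := U * X), conjTranspose_apply, star_trivial, pow_two]
      _ = singVals X i ^ 2 := by rw [hgram, diagonal_apply_eq]
  have hop : ∀ i, ‖WithLp.toLp 2 ((U * M) i)‖ ≤ matOpNorm M := fun i => by
    rw [matOpNorm_eq_l2_opNorm, ← l2_opNorm_unitary_mul hU]
    exact norm_toLp_row_le_l2_opNorm (U * M) i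
  rw [← matInner_unitary_mul_unitary_mul hU, matInner_eq_sum_inner, nuclearNorm, Finset.sum_mul]
  refine (Finset.abs_sum_le_sum_abs _ _).trans (Finset.sum_le_sum fun i _ => ?_)
  calc |inner ℝ (WithLp.toLp 2 ((U * X) i)) (WithLp.toLp 2 ((U * M) i))|
      ≤ ‖WithLp.toLp 2 ((U * X) i)‖ * ‖WithLp.toLp 2 ((U * M) i)‖ := abs_real_inner_le_norm _ _
    _ ≤ singVals X i * matOpNorm M := by
        rw [hrow]
        exact mul_le_mul_of_nonneg_left (hop i) (singVals_nonneg X i)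

lemma matInner_polarFactor (X : Matrix (Fin n₁) (Fin n₂) ℝ) :
    matInner X (polarFactor X) = nuclearNorm X := by
  rw [matInner_comm, matInner, trace_mul_comm]
  exact trace_mul_conjTranspose_polarFactor X

lemma nuclearNorm_nonneg (X : Matrix (Fin n₁) (Fin n₂) ℝ) : 0 ≤ nuclearNorm X :=
  Finset.sum_nonneg fun i _ => singVals_nonneg X i

lemma abs_matInner_le_nuclearNorm {W : Matrix (Fin n₁) (Fin n₂) ℝ} (hW : IsPartialIsometry W)
    (X : Matrix (Fin n₁) (Fin n₂) ℝ) : |matInner X W| ≤ nuclearNorm X := by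
  have hop : matOpNorm W ≤ 1 := (matOpNorm_eq_l2_opNorm W).trans_le hW.l2_opNorm_le_one
  exact (abs_matInner_le X W).trans
    (mul_le_of_le_one_right (nuclearNorm_nonneg X) hop)

lemma nuclearNorm_add_le (X Y : Matrix (Fin n₁) (Fin n₂) ℝ) :
    nuclearNorm (X + Y) ≤ nuclearNorm X + nuclearNorm Y := by
  have hW := isPartialIsometry_polarFactor (X + Y)
  rw [← matInner_polarFactor (X + Y), matInner_add_left]
  exact add_le_add (le_of_abs_le (abs_matInner_le_nuclearNorm hW X))
    (le_of_abs_le (abs_matInner_le_nuclearNorm hW Y))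

lemma nuclearNorm_sub_le (X Y : Matrix (Fin n₁) (Fin n₂) ℝ) :
    nuclearNorm (X - Y) ≤ nuclearNorm X + nuclearNorm Y := by
  have hW := isPartialIsometry_polarFactor (X - Y)
  rw [← matInner_polarFactor (X - Y), matInner_sub_left, sub_eq_add_neg]
  exact add_le_add (le_of_abs_le (abs_matInner_le_nuclearNorm hW X))
    (neg_le.1 (abs_le.1 (abs_matInner_le_nuclearNorm hW Y)).1)

lemma matInner_eq_zero_of_conjTranspose_mul_eq_zero {X Y : Matrix (Fin n₁) (Fin n₂) ℝ}
    (h : Xᴴ * Y = 0) : matInner X Y = 0 := by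
  rw [matInner, ← conjTranspose_eq_transpose_of_trivial, h, trace_zero]

lemma nuclearNorm_add_of_orthogonal {X Y : Matrix (Fin n₁) (Fin n₂) ℝ} (hcol : Xᴴ * Y = 0)
    (hrow : X * Yᴴ = 0) : nuclearNorm (X + Y) = nuclearNorm X + nuclearNorm Y := by
  have hXW : Xᴴ * polarFactor Y = 0 := mul_polarFactor_eq_zero hcol
  have hYV : Yᴴ * polarFactor X = 0 :=
    mul_polarFactor_eq_zero (conjTranspose_mul_eq_zero_comm.1 hcol)
  have hVW : (polarFactor X)ᴴ * polarFactor Y = 0 :=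
    mul_polarFactor_eq_zero (conjTranspose_mul_eq_zero_comm.1 hYV)
  have hVW' : polarFactor X * (polarFactor Y)ᴴ = 0 :=
    mul_conjTranspose_eq_zero_comm.1 <| polarFactor_mul_eq_zero <|
      mul_conjTranspose_eq_zero_comm.1 <| polarFactor_mul_eq_zero hrow
  have hsum : IsPartialIsometry (polarFactor X + polarFactor Y) :=
    (isPartialIsometry_polarFactor X).add (isPartialIsometry_polarFactor Y) hVW hVW'
  refine (nuclearNorm_add_le X Y).antisymm ?_
  calc nuclearNorm X + nuclearNorm Y
      = matInner (X + Y) (polarFactor X + polarFactor Y) := by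
        rw [matInner_add_left, matInner_add_right, matInner_add_right,
          matInner_eq_zero_of_conjTranspose_mul_eq_zero hXW,
          matInner_eq_zero_of_conjTranspose_mul_eq_zero hYV,
          matInner_polarFactor, matInner_polarFactor, add_zero, zero_add]
    _ ≤ nuclearNorm (X + Y) := le_of_abs_le (abs_matInner_le_nuclearNorm hsum _)

lemma sum_sq_singVals (X : Matrix (Fin n₁) (Fin n₂) ℝ) :
    ∑ i, singVals X i ^ 2 = frobNorm X ^ 2 := by
  have h := (isHermitian_mul_conjTranspose_self X).trace_eq_sum_eigenvalues
  rw [eigenvalues_eq_sq_singVals] at h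
  rw [frobNorm_sq, matInner, trace_mul_comm]
  exact h.symm

lemma rank_eq_card_singVals_ne_zero (X : Matrix (Fin n₁) (Fin n₂) ℝ) :
    X.rank = Finset.card {i | singVals X i ≠ 0} := by
  rw [← rank_self_mul_conjTranspose,
    (isHermitian_mul_conjTranspose_self X).rank_eq_card_non_zero_eigs,
    eigenvalues_eq_sq_singVals, Fintype.card_subtype]
  simp only [ne_eq, pow_eq_zero_iff two_ne_zero]

lemma sq_nuclearNorm_le (X : Matrix (Fin n₁) (Fin n₂) ℝ) :
    nuclearNorm X ^ 2 ≤ X.rank * frobNorm X ^ 2 :=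
  calc nuclearNorm X ^ 2 = (∑ i with singVals X i ≠ 0, singVals X i) ^ 2 := by
        rw [nuclearNorm, Finset.sum_filter_ne_zero]
    _ ≤ X.rank * ∑ i with singVals X i ≠ 0, singVals X i ^ 2 := by
        rw [rank_eq_card_singVals_ne_zero]
        exact sq_sum_le_card_mul_sum_sq
    _ ≤ X.rank * frobNorm X ^ 2 := by
        rw [← sum_sq_singVals]
        exact mul_le_mul_of_nonneg_left (Finset.sum_le_sum_of_subset_of_nonneg
          (Finset.filter_subset _ _) fun i _ _ => sq_nonneg _) X.rank.cast_nonneg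

lemma nuclearNorm_normalPart_le {X H : Matrix (Fin n₁) (Fin n₂) ℝ}
    (h : nuclearNorm (X + H) ≤ nuclearNorm X) :
    nuclearNorm (normalPart X H) ≤ nuclearNorm (tangentPart X H) := by
  have hsplit : X + normalPart X H = X + H - tangentPart X H := by
    rw [tangentPart, add_sub_assoc, sub_sub_cancel]
  have hadd := nuclearNorm_add_of_orthogonal (conjTranspose_mul_normalPart X H)
    (mul_conjTranspose_normalPart X H)
  have hsub := nuclearNorm_sub_le (X + H) (tangentPart X H)
  rw [← hsplit, hadd] at hsub
  linarith

lemma sq_frobNorm_tangentPart_le (X H : Matrix (Fin n₁) (Fin n₂) ℝ) :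
    frobNorm (tangentPart X H) ^ 2 ≤ frobNorm H ^ 2 := by
  have horth : matInner (tangentPart X H) (normalPart X H) = 0 :=
    trace_conjTranspose_tangentPart_mul_normalPart X H
  have hpyth : frobNorm H ^ 2 = frobNorm (tangentPart X H) ^ 2 + frobNorm (normalPart X H) ^ 2 := by
    conv_lhs => rw [← tangentPart_add_normalPart X H]
    rw [frobNorm_sq, matInner_add_left, matInner_add_right, matInner_add_right,
      matInner_comm (normalPart X H) (tangentPart X H), horth, zero_add, add_zero, frobNorm_sq,
      frobNorm_sq]
  exact hpyth ▸ le_add_of_nonneg_right (sq_nonneg _)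

lemma nuclearNorm_le_two_mul_nuclearNorm_tangentPart {X H : Matrix (Fin n₁) (Fin n₂) ℝ}
    (h : nuclearNorm (X + H) ≤ nuclearNorm X) :
    nuclearNorm H ≤ 2 * nuclearNorm (tangentPart X H) := by
  have hadd := nuclearNorm_add_le (tangentPart X H) (normalPart X H)
  rw [tangentPart_add_normalPart] at hadd
  linarith [nuclearNorm_normalPart_le h]

lemma lstarRank_le_of_nuclearNorm_add_le {X H : Matrix (Fin n₁) (Fin n₂) ℝ}
    (h : nuclearNorm (X + H) ≤ nuclearNorm X) : lstarRank H ≤ 8 * X.rank := by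
  refine div_le_of_le_mul₀ (sq_nonneg _) (by positivity) ?_
  have hrank : ((tangentPart X H).rank : ℝ) ≤ 2 * X.rank := by
    exact_mod_cast rank_tangentPart_le X H
  calc nuclearNorm H ^ 2 ≤ (2 * nuclearNorm (tangentPart X H)) ^ 2 :=
        pow_le_pow_left₀ (nuclearNorm_nonneg H)
          (nuclearNorm_le_two_mul_nuclearNorm_tangentPart h) 2
    _ = 4 * nuclearNorm (tangentPart X H) ^ 2 := by ring
    _ ≤ 4 * ((tangentPart X H).rank * frobNorm (tangentPart X H) ^ 2) := by
        gcongr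
        exact sq_nuclearNorm_le _
    _ ≤ 4 * (2 * X.rank * frobNorm H ^ 2) := by
        gcongr ?_ * (?_ * ?_)
        exact sq_frobNorm_tangentPart_le X H
    _ = 8 * X.rank * frobNorm H ^ 2 := by ring

end NuclearNorm

section Measurement

open Matrix

variable {n₁ n₂ m : ℕ}

lemma frobNorm_nonneg (X : Matrix (Fin n₁) (Fin n₂) ℝ) : 0 ≤ frobNorm X :=
  Real.sqrt_nonneg _

lemma frobNorm_pos {X : Matrix (Fin n₁) (Fin n₂) ℝ} (hX : X ≠ 0) : 0 < frobNorm X := by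
  refine (frobNorm_nonneg X).lt_of_ne' fun h => hX ?_
  rw [← trace_conjTranspose_mul_self_eq_zero_iff, conjTranspose_eq_transpose_of_trivial]
  exact (frobNorm_sq X).symm.trans (by rw [h, zero_pow two_ne_zero])

lemma nuclearNorm_le_sqrt_mul_frobNorm {τ : ℝ} {X : Matrix (Fin n₁) (Fin n₂) ℝ}
    (hX : X ≠ 0) (hτ : lstarRank X ≤ τ) : nuclearNorm X ≤ √τ * frobNorm X := by
  have h : (nuclearNorm X / frobNorm X) ^ 2 ≤ τ := by rwa [div_pow]
  exact (div_le_iff₀ (frobNorm_pos hX)).1 (Real.le_sqrt_of_sq_le h)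

lemma vnorm_sq (v : Fin m → ℝ) : vnorm v ^ 2 = ∑ k, v k * v k := by
  rw [vnorm, Real.sq_sqrt (Finset.sum_nonneg fun _ _ => sq_nonneg _)]
  simp only [pow_two]

lemma cmsvMin_nonneg (A : Matrix (Fin n₁) (Fin n₂) ℝ → (Fin m → ℝ)) (τ : ℝ) : 0 ≤ cmsvMin A τ := by
  refine Real.sInf_nonneg ?_
  rintro _ ⟨X, -, -, rfl⟩
  exact div_nonneg (Real.sqrt_nonneg _) (frobNorm_nonneg X)

lemma cmsvMin_mul_frobNorm_le (A : Matrix (Fin n₁) (Fin n₂) ℝ → (Fin m → ℝ)) {τ : ℝ}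
    {X : Matrix (Fin n₁) (Fin n₂) ℝ} (hX : X ≠ 0) (hτ : lstarRank X ≤ τ) :
    cmsvMin A τ * frobNorm X ≤ vnorm (A X) := by
  rw [← le_div_iff₀ (frobNorm_pos hX)]
  refine csInf_le ⟨0, ?_⟩ ⟨X, hX, hτ, rfl⟩
  rintro _ ⟨Y, -, -, rfl⟩
  exact div_nonneg (Real.sqrt_nonneg _) (frobNorm_nonneg Y)

lemma sq_cmsvMin_mul_frobNorm_le {A : Matrix (Fin n₁) (Fin n₂) ℝ → (Fin m → ℝ)}
    {Astar : (Fin m → ℝ) → Matrix (Fin n₁) (Fin n₂) ℝ}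
    (hadj : ∀ X z, ∑ k, A X k * z k = matInner X (Astar z)) {τ : ℝ}
    {X : Matrix (Fin n₁) (Fin n₂) ℝ} (hτ : lstarRank X ≤ τ) :
    cmsvMin A τ ^ 2 * frobNorm X ≤ √τ * matOpNorm (Astar (A X)) := by
  have hop : 0 ≤ matOpNorm (Astar (A X)) := matOpNorm_nonneg _
  rcases eq_or_ne X 0 with rfl | hX
  · have hfrob : frobNorm (0 : Matrix (Fin n₁) (Fin n₂) ℝ) = 0 := by simp [frobNorm]
    rw [hfrob, mul_zero]
    exact mul_nonneg (Real.sqrt_nonneg τ) hop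
  refine le_of_mul_le_mul_right ?_ (frobNorm_pos hX)
  calc cmsvMin A τ ^ 2 * frobNorm X * frobNorm X = (cmsvMin A τ * frobNorm X) ^ 2 := by ring
    _ ≤ vnorm (A X) ^ 2 := pow_le_pow_left₀
        (mul_nonneg (cmsvMin_nonneg A τ) (frobNorm_nonneg X)) (cmsvMin_mul_frobNorm_le A hX hτ) 2
    _ = matInner X (Astar (A X)) := by rw [vnorm_sq, hadj]
    _ ≤ nuclearNorm X * matOpNorm (Astar (A X)) := le_of_abs_le (abs_matInner_le _ _)
    _ ≤ √τ * frobNorm X * matOpNorm (Astar (A X)) :=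
        mul_le_mul_of_nonneg_right (nuclearNorm_le_sqrt_mul_frobNorm hX hτ) hop
    _ = √τ * matOpNorm (Astar (A X)) * frobNorm X := by ring

end Measurement

theorem stmt7_general {n₁ n₂ m : ℕ} (𝒜 : Matrix (Fin n₁) (Fin n₂) ℝ →ₗ[ℝ] (Fin m → ℝ))
    (Astar : (Fin m → ℝ) →ₗ[ℝ] Matrix (Fin n₁) (Fin n₂) ℝ)
    (hadj : ∀ (X : Matrix (Fin n₁) (Fin n₂) ℝ) (z : Fin m → ℝ),
      (∑ k, 𝒜 X k * z k) = matInner X (Astar z))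
    {X Xhat : Matrix (Fin n₁) (Fin n₂) ℝ} {r : ℕ} (hrank : X.rank ≤ r) {y : Fin m → ℝ} {lam : ℝ}
    (hρ : 0 < cmsvMin (⇑𝒜) (8 * (r : ℝ)))
    (hX : matOpNorm (Astar (y - 𝒜 X)) ≤ lam) (hXhat : matOpNorm (Astar (y - 𝒜 Xhat)) ≤ lam)
    (hnuc : nuclearNorm Xhat ≤ nuclearNorm X) :
    frobNorm (Xhat - X) ≤
      4 * Real.sqrt 2 / cmsvMin (⇑𝒜) (8 * (r : ℝ)) ^ 2 * Real.sqrt r * lam := by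
  have hτ : lstarRank (Xhat - X) ≤ 8 * r :=
    (lstarRank_le_of_nuclearNorm_add_le (by rwa [add_sub_cancel])).trans (by gcongr)
  have hres : Astar (𝒜 (Xhat - X)) = Astar (y - 𝒜 X) - Astar (y - 𝒜 Xhat) := by
    rw [← map_sub, map_sub 𝒜, sub_sub_sub_cancel_left]
  have hop : matOpNorm (Astar (𝒜 (Xhat - X))) ≤ 2 * lam := by
    rw [hres, two_mul]
    exact (matOpNorm_sub_le _ _).trans (add_le_add hX hXhat)
  have hsqrt : √(8 * r) = 2 * √2 * √r := by
    rw [show (8 : ℝ) * r = 2 ^ 2 * 2 * r by ring, Real.sqrt_mul (by norm_num),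
      Real.sqrt_mul (by norm_num), Real.sqrt_sq (by norm_num)]
  calc frobNorm (Xhat - X)
      ≤ √(8 * r) * matOpNorm (Astar (𝒜 (Xhat - X))) / cmsvMin 𝒜 (8 * r) ^ 2 := by
        rw [le_div_iff₀' (pow_pos hρ 2)]
        exact sq_cmsvMin_mul_frobNorm_le hadj hτ
    _ ≤ 2 * √2 * √r * (2 * lam) / cmsvMin 𝒜 (8 * r) ^ 2 := by rw [hsqrt]; gcongr
    _ = 4 * √2 / cmsvMin 𝒜 (8 * r) ^ 2 * √r * lam := by ring

/-- stability of the matrix Dantzig selector. -/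
theorem stmt7 {n₁ n₂ m : ℕ} (hn : n₁ ≤ n₂)
    (𝒜 : Matrix (Fin n₁) (Fin n₂) ℝ →ₗ[ℝ] (Fin m → ℝ))
    (Astar : (Fin m → ℝ) →ₗ[ℝ] Matrix (Fin n₁) (Fin n₂) ℝ)
    (hadj : ∀ (X : Matrix (Fin n₁) (Fin n₂) ℝ) (z : Fin m → ℝ),
      (∑ k, 𝒜 X k * z k) = matInner X (Astar z))
    (X : Matrix (Fin n₁) (Fin n₂) ℝ) (r : ℕ) (hrank : X.rank = r)
    (w : Fin m → ℝ) (lam : ℝ) (hw : matOpNorm (Astar w) ≤ lam)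
    (y : Fin m → ℝ) (hy : y = 𝒜 X + w)
    (hρ : 0 < cmsvMin (⇑𝒜) (8 * (r : ℝ)))
    (Xhat : Matrix (Fin n₁) (Fin n₂) ℝ)
    (hfeas : matOpNorm (Astar (y - 𝒜 Xhat)) ≤ lam)
    (hopt : ∀ Z : Matrix (Fin n₁) (Fin n₂) ℝ,
      matOpNorm (Astar (y - 𝒜 Z)) ≤ lam → nuclearNorm Xhat ≤ nuclearNorm Z) :
    frobNorm (Xhat - X) ≤
      4 * Real.sqrt 2 / cmsvMin (⇑𝒜) (8 * (r : ℝ)) ^ 2 * Real.sqrt r * lam :=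
  stmt7_general 𝒜 Astar hadj hrank.le hρ (by simpa [hy] using hw) hfeas
    (hopt X (by simpa [hy] using hw))

end
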